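/- Let p be a prime and let 𝔇 be the family of branch groups on the p-ary rooted tree T which act as a p-group on each layer of T (i.e. for each n the image of the group in the symmetric group on L_n is a finite p-group). Let Γ_1 be a direct product of n_1 groups in 𝔇 and Γ_2 a direct product of n_2 groups in 𝔇. If Γ_1 and Γ_2 are abstractly commensurable, then n_1 ≡ n_2 (mod p−1). -/

import Mathlib

/-!  Common definitions: rooted trees of type `(m n)`, tree automorphisms,
rigid stabilizers, branch groups, and auxiliary notions. -/

universe u

/-- Vertices of the rooted tree of type `m`: finite sequences `(x_0, …, x_{n-1})`
with `x_i ∈ {1, …, m i}` (encoded as `Fin (m i)`). -/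
def Vertex (m : ℕ → ℕ) : Type := Σ n : ℕ, ∀ i : Fin n, Fin (m i)

namespace Vertex

variable {m : ℕ → ℕ}

/-- The level of a vertex: its length. -/
def level (v : Vertex m) : ℕ := v.1

/-- `v` is a (weak) prefix of `w`; i.e. `w` lies in the subtree `T_v`
(`w = v` or `w` is a descendant of `v`). -/
def IsPrefix (v w : Vertex m) : Prop :=
  ∃ h : v.1 ≤ w.1, ∀ i : Fin v.1, w.2 (Fin.castLE h i) = v.2 i

/-- `w` is a child (one-step extension) of `v`. -/
def IsChild (v w : Vertex m) : Prop := w.1 = v.1 + 1 ∧ IsPrefix v w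

end Vertex

/-- The `n`-th layer `L_n` of the tree: all vertices of level `n`. -/
def layer (m : ℕ → ℕ) (n : ℕ) : Set (Vertex m) := {v | v.1 = n}

section Rist

variable {m : ℕ → ℕ} (G : Type*) [Group G] [MulAction G (Vertex m)]

/-- The rigid stabilizer of a vertex `v`: all elements fixing every vertex
outside the subtree `T_v`. -/
def rist (v : Vertex m) : Subgroup G :=
  ⨅ w ∈ {w : Vertex m | ¬ Vertex.IsPrefix v w}, MulAction.stabilizer G w

/-- The subgroup generated by the rigid stabilizers of the vertices in `X`. -/
def ristSet (X : Set (Vertex m)) : Subgroup G := ⨆ v ∈ X, rist G v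

/-- `rist_G(n)`, the rigid stabilizer of the `n`-th layer. -/
def ristLayer (m : ℕ → ℕ) (G : Type*) [Group G] [MulAction G (Vertex m)] (n : ℕ) :
    Subgroup G :=
  ristSet G (layer m n)

/-- The orbit of the vertex `v` under a subgroup `H ≤ G`. -/
def subOrbit (H : Subgroup G) (v : Vertex m) : Set (Vertex m) :=
  {w | ∃ h ∈ H, h • v = w}

/-- The set of orbits of a subgroup `H ≤ G` on a set `X` of vertices. -/
def orbitsOn (H : Subgroup G) (X : Set (Vertex m)) : Set (Set (Vertex m)) :=
  (fun v => subOrbit G H v) '' X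

end Rist

/-- `G` is a branch group on the rooted tree of type `m` (with respect to the given
action): the action is faithful and by tree automorphisms, `G` acts transitively on
each layer, and each `rist_G(n)` has finite index in `G`. -/
structure IsBranchGroup (m : ℕ → ℕ) (G : Type*) [Group G] [MulAction G (Vertex m)] :
    Prop where
  faithful : ∀ g : G, (∀ v : Vertex m, g • v = v) → g = 1
  aut : ∀ (g : G) (v w : Vertex m), Vertex.IsChild v w ↔ Vertex.IsChild (g • v) (g • w)
  trans : ∀ v w : Vertex m, v.1 = w.1 → ∃ g : G, g • v = w
  ristFiniteIndex : ∀ n : ℕ, (ristLayer m G n).FiniteIndex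

/-- A group is virtually soluble if it has a soluble subgroup of finite index. -/
def VirtuallySolvable (Γ : Type*) [Group Γ] : Prop :=
  ∃ S : Subgroup Γ, S.FiniteIndex ∧ IsSolvable ↥S

/-- A group is virtually abelian if it has an abelian subgroup of finite index. -/
def VirtuallyAbelian (Γ : Type*) [Group Γ] : Prop :=
  ∃ S : Subgroup Γ, S.FiniteIndex ∧ ∀ a ∈ S, ∀ b ∈ S, a * b = b * a

/-- For subgroups `A ≤ B` of a group with `A` normalised by `B`, this says that the
factor `B/A` belongs to the class `𝔛`. -/
def FactorIn (𝔛 : (Γ : Type u) → [inst : Group Γ] → Prop) {G : Type u} [Group G]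
    (A B : Subgroup G) : Prop :=
  ∃ hn : (A.subgroupOf B).Normal, letI := hn; 𝔛 (↥B ⧸ A.subgroupOf B)

/-- The factor `B/A` is virtually soluble. -/
def FactorVirtuallySolvable {G : Type*} [Group G] (A B : Subgroup G) : Prop :=
  ∃ hn : (A.subgroupOf B).Normal,
    letI := hn; VirtuallySolvable (↥B ⧸ A.subgroupOf B)

/-- The factor `B/A` is virtually abelian. -/
def FactorVirtuallyAbelian {G : Type*} [Group G] (A B : Subgroup G) : Prop :=
  ∃ hn : (A.subgroupOf B).Normal,
    letI := hn; VirtuallyAbelian (↥B ⧸ A.subgroupOf B)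

/-- `Γ` has `r` infinite normal subgroups that generate their direct product in `Γ`:
each of them intersects trivially the subgroup generated by the others. -/
def HasIndepFamily (Γ : Type*) [Group Γ] (r : ℕ) : Prop :=
  ∃ N : Fin r → Subgroup Γ, (∀ i, (N i).Normal) ∧ (∀ i, Infinite ↥(N i)) ∧
    ∀ i, N i ⊓ (⨆ j ∈ ({i}ᶜ : Set (Fin r)), N j) = ⊥

set_option linter.style.haveILetI false

/-- Abstract forest action. -/
structure ForestAct (H Ω : Type*) [Group H] [MulAction H Ω] (ℓ : Ω → ℕ)
    (le : Ω → Ω → Prop) : Prop where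
  faithful : ∀ g : H, (∀ x : Ω, g • x = x) → g = 1
  lev : ∀ (g : H) x, ℓ (g • x) = ℓ x
  le_smul : ∀ (g : H) x y, le x y → le (g • x) (g • y)
  uniq : ∀ u w x, ℓ u = ℓ w → le u x → le w x → u = w
  desc : ∀ u n, ℓ u ≤ n → ∃ x, ℓ x = n ∧ le u x
  nonab : ∀ u, ∃ a b : H, (∀ x, ¬ le u x → a • x = x) ∧ (∀ x, ¬ le u x → b • x = x) ∧
    a * b ≠ b * a

theorem fa_commute {H Ω : Type*} [Group H] [MulAction H Ω] {P Q : Ω → Prop}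
    (hf : ∀ g : H, (∀ x : Ω, g • x = x) → g = 1)
    (hPQ : ∀ x, P x → Q x → False) (a b : H)
    (ha : ∀ x, ¬ P x → a • x = x) (hb : ∀ x, ¬ Q x → b • x = x) : a * b = b * a := by
  have hinj : Function.Injective (MulAction.toPermHom H Ω) := by
    rw [injective_iff_map_eq_one]
    intro g hg
    apply hf
    intro x
    have := congrArg (fun e : Equiv.Perm Ω => e x) hg
    simpa using this
  apply hinj
  rw [map_mul, map_mul]
  apply Equiv.Perm.Disjoint.commute
  intro x
  by_cases h : P x
  · right
    exact hb x (fun h' => hPQ x h h')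
  · left
    exact ha x h

namespace ForestAct

variable {H Ω : Type*} [Group H] [MulAction H Ω] {ℓ : Ω → ℕ} {le : Ω → Ω → Prop}

theorem smul_of_le (F : ForestAct H Ω ℓ le) {g : H} {u x : Ω} (h : le u x) (hx : g • x = x) :
    g • u = u := by
  apply F.uniq _ _ x (F.lev g u) _ h
  have := F.le_smul g u x h
  rwa [hx] at this

theorem comm_mem (F : ForestAct H Ω ℓ le) (N : Subgroup H) [N.Normal] {x : H} (hx : x ∈ N)
    {v : Ω} (hv : x • v ≠ v) {a b : H} (ha : ∀ x, ¬ le v x → a • x = x)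
    (hb : ∀ x, ¬ le v x → b • x = x) : a⁻¹ * b * a * b⁻¹ ∈ N := by
  have hdis : ∀ y, le (x • v) y → le v y → False := fun y h1 h2 =>
    hv (F.uniq _ _ y (F.lev x v) h1 h2)
  have ha' : ∀ y, ¬ le (x • v) y → (x * a * x⁻¹) • y = y := by
    intro y hy
    rw [mul_smul, mul_smul, ha, smul_inv_smul]
    intro h
    apply hy
    have := F.le_smul x _ _ h
    rwa [smul_inv_smul] at this
  have c1 := fa_commute F.faithful hdis _ _ ha' ha
  have c2 := fa_commute F.faithful hdis _ _ ha' hb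
  have hc : x * a * x⁻¹ * a⁻¹ ∈ N := by
    have : x * (a * x⁻¹ * a⁻¹) ∈ N :=
      N.mul_mem hx (‹N.Normal›.conj_mem _ (N.inv_mem hx) a)
    simpa [mul_assoc] using this
  have hc2 : (x * a * x⁻¹ * a⁻¹) * (b * (x * a * x⁻¹ * a⁻¹)⁻¹ * b⁻¹) ∈ N :=
    N.mul_mem hc (‹N.Normal›.conj_mem _ (N.inv_mem hc) b)
  generalize x * a * x⁻¹ = a' at *
  have e : a⁻¹ * b * a * b⁻¹ = (a' * a⁻¹) * (b * (a' * a⁻¹)⁻¹ * b⁻¹) := by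
    have d1 : Commute a' (a⁻¹ * b * a) :=
      ((Commute.inv_right c1).mul_right c2).mul_right c1
    have : a' * (a⁻¹ * b * a) * a'⁻¹ = a⁻¹ * b * a := by
      rw [d1.eq, mul_inv_cancel_right]
    calc a⁻¹ * b * a * b⁻¹ = a' * (a⁻¹ * b * a) * a'⁻¹ * b⁻¹ := by rw [this]
      _ = _ := by group
  rw [e]; exact hc2

end ForestAct

/-- Sizes of families of nontrivial, pairwise disjoint normal subgroups. -/
def famSet (H : Type*) [Group H] : Set ℕ :=
  {r | ∃ N : Fin r → Subgroup H, (∀ i, (N i).Normal) ∧ (∀ i, N i ≠ ⊥) ∧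
    ∀ i j, i ≠ j → N i ⊓ N j = ⊥}

theorem famSet_sub {H K : Type*} [Group H] [Group K] (e : H ≃* K) : famSet H ⊆ famSet K := by
  rintro r ⟨N, h1, h2, h3⟩
  refine ⟨fun i => (N i).map e.toMonoidHom, fun i => (h1 i).map _ e.surjective, fun i h => ?_,
    fun i j hij => ?_⟩
  · exact h2 i ((Subgroup.map_eq_bot_iff_of_injective _ e.injective).1 h)
  · rw [← Subgroup.map_inf _ _ _ e.injective, h3 i j hij, Subgroup.map_bot]

/-- Layers. -/
abbrev FLay {Ω : Type*} (ℓ : Ω → ℕ) (n : ℕ) : Type _ := {x : Ω // ℓ x = n}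

namespace ForestAct

variable {H Ω : Type*} [Group H] [MulAction H Ω] {ℓ : Ω → ℕ} {le : Ω → Ω → Prop}

/-- Action on layers. -/
@[reducible] def act (F : ForestAct H Ω ℓ le) (n : ℕ) : MulAction H (FLay ℓ n) where
  smul g x := ⟨g • x.1, (F.lev g x.1).trans x.2⟩
  one_smul x := Subtype.ext (one_smul H x.1)
  mul_smul a b x := Subtype.ext (mul_smul a b x.1)

/-- Orbits on a layer. -/
abbrev Orb (F : ForestAct H Ω ℓ le) (n : ℕ) : Type _ :=
  letI := F.act n
  MulAction.orbitRel.Quotient H (FLay ℓ n)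

def orb (F : ForestAct H Ω ℓ le) {n : ℕ} (x : FLay ℓ n) : F.Orb n :=
  letI := F.act n
  (Quotient.mk'' x : MulAction.orbitRel.Quotient H (FLay ℓ n))

theorem orb_eq (F : ForestAct H Ω ℓ le) {n : ℕ} (x y : FLay ℓ n) :
    F.orb x = F.orb y ↔ ∃ g : H, g • y.1 = x.1 := by
  letI := F.act n
  refine (Quotient.eq'' (s₁ := MulAction.orbitRel H (FLay ℓ n))).trans ?_
  constructor
  · rintro ⟨g, hg⟩
    exact ⟨g, congrArg Subtype.val hg⟩
  · rintro ⟨g, hg⟩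
    exact ⟨g, Subtype.ext hg⟩

theorem orb_surj (F : ForestAct H Ω ℓ le) {n : ℕ} : Function.Surjective (F.orb (n := n)) :=
  fun q => Quotient.inductionOn' q fun x => ⟨x, rfl⟩

/-- Fixer of the outside of an orbit. -/
def orbSub (F : ForestAct H Ω ℓ le) {n : ℕ} (q : F.Orb n) : Subgroup H where
  carrier := {g | ∀ x, (∀ y : FLay ℓ n, F.orb y = q → ¬ le y.1 x) → g • x = x}
  one_mem' := fun x _ => one_smul H x
  mul_mem' := by
    intro a b ha hb x hx
    rw [mul_smul, hb x hx, ha x hx]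
  inv_mem' := by
    intro a ha x hx
    rw [inv_smul_eq_iff, ha x hx]

theorem orbSub_normal (F : ForestAct H Ω ℓ le) {n : ℕ} (q : F.Orb n) : (F.orbSub q).Normal := by
  constructor
  intro a ha g x hx
  rw [mul_smul, mul_smul, ha, smul_inv_smul]
  intro y hy hle
  refine hx ⟨g • y.1, (F.lev g y.1).trans y.2⟩ ?_ ?_
  · rw [← hy]
    exact (F.orb_eq _ _).2 ⟨g, rfl⟩
  · have := F.le_smul g _ _ hle
    rwa [smul_inv_smul] at this

theorem card_mem (F : ForestAct H Ω ℓ le) (n : ℕ) [Finite (FLay ℓ n)] :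
    Nat.card (F.Orb n) ∈ famSet H := by
  haveI : Finite (F.Orb n) := Finite.of_surjective _ F.orb_surj
  let e := Finite.equivFin (F.Orb n)
  refine ⟨fun i => F.orbSub (e.symm i), fun i => F.orbSub_normal _, fun i hi => ?_,
    fun i j hij => ?_⟩
  · obtain ⟨v, hv⟩ := F.orb_surj (e.symm i)
    obtain ⟨a, b, ha, hb, hab⟩ := F.nonab v.1
    have : a ∈ F.orbSub (e.symm i) := fun x hx => ha x (hx v hv)
    replace hi : F.orbSub (e.symm i) = ⊥ := hi
    rw [hi, Subgroup.mem_bot] at this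
    subst this
    simp at hab
  · rw [eq_bot_iff]
    rintro a ⟨h1, h2⟩
    rw [Subgroup.mem_bot]
    apply F.faithful
    intro x
    by_cases hx : ∀ y : FLay ℓ n, F.orb y = e.symm i → ¬ le y.1 x
    · exact h1 x hx
    · push Not at hx
      obtain ⟨y, hy, hyx⟩ := hx
      apply h2 x
      intro z hz hzx
      have : y = z := Subtype.ext (F.uniq _ _ x (y.2.trans z.2.symm) hyx hzx)
      subst this
      exact hij (e.symm.injective (hy.symm.trans hz))

theorem le_card (F : ForestAct H Ω ℓ le) (hfin : ∀ n, Finite (FLay ℓ n)) {r : ℕ}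
    (hr : r ∈ famSet H) : ∃ n, r ≤ Nat.card (F.Orb n) := by
  obtain ⟨N, hN, h1, h2⟩ := hr
  have : ∀ i, ∃ g ∈ N i, ∃ x : Ω, g • x ≠ x := by
    intro i
    obtain ⟨g, hg, hg1⟩ := (Subgroup.ne_bot_iff_exists_ne_one.1 (h1 i)) |> fun ⟨g, hg⟩ =>
      (⟨g.1, g.2, fun h => hg (Subtype.ext h)⟩ : ∃ g, g ∈ N i ∧ g ≠ 1)
    refine ⟨g, hg, ?_⟩
    by_contra! h
    exact hg1 (F.faithful g h)
  choose g hg x hx using this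
  let n := Finset.univ.sup fun i => ℓ (x i)
  refine ⟨n, ?_⟩
  have : ∀ i, ∃ y, ℓ y = n ∧ le (x i) y := fun i =>
    F.desc (x i) n (Finset.le_sup (f := fun i => ℓ (x i)) (Finset.mem_univ i))
  choose y hy hxy using this
  have hgy : ∀ i, g i • y i ≠ y i := fun i h => hx i (F.smul_of_le (hxy i) h)
  haveI := hfin n
  haveI : Finite (F.Orb n) := Finite.of_surjective _ F.orb_surj
  have hinj : Function.Injective (fun i => F.orb (⟨y i, hy i⟩ : FLay ℓ n)) := by
    intro i j hij
    by_contra hne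
    obtain ⟨h, hh⟩ := (F.orb_eq _ _).1 hij
    replace hh : h • y j = y i := hh
    obtain ⟨a, b, ha, hb, hab⟩ := F.nonab (y i)
    haveI := hN i
    haveI := hN j
    have m1 := F.comm_mem (N i) (hg i) (hgy i) ha hb
    have m2 := F.comm_mem (N j) ((hN j).conj_mem _ (hg j) h) (v := y i) (by
      rw [← hh, mul_smul, mul_smul, inv_smul_smul]
      intro h'
      exact hgy j (MulAction.injective h h')) ha hb
    have : a⁻¹ * b * a * b⁻¹ ∈ N i ⊓ N j := ⟨m1, m2⟩
    rw [h2 i j hne, Subgroup.mem_bot] at this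
    apply hab
    rw [mul_inv_eq_one, mul_assoc, inv_mul_eq_iff_eq_mul] at this
    exact this.symm
  simpa using Nat.card_le_card_of_injective _ hinj

theorem card_modEq (F : ForestAct H Ω ℓ le) {p : ℕ} [hp : Fact p.Prime] (n : ℕ)
    [Finite (FLay ℓ n)] (hpg : ∀ g : H, ∃ e : ℕ, ∀ x, ℓ x = n → (g ^ p ^ e) • x = x) :
    Nat.card (F.Orb n) ≡ Nat.card (FLay ℓ n) [MOD p - 1] := by
  classical
  letI := F.act n
  have hsz : ∀ x : FLay ℓ n, Nat.card (MulAction.orbit H x) ≡ 1 [MOD p - 1] := by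
    intro x
    have hP : IsPGroup p (MulAction.toPermHom H (FLay ℓ n)).range := by
      rintro ⟨_, g, rfl⟩
      obtain ⟨e, he⟩ := hpg g
      refine ⟨e, Subtype.ext ?_⟩
      change (MulAction.toPermHom H (FLay ℓ n) g) ^ p ^ e = 1
      rw [← map_pow]
      ext y
      exact congrArg Subtype.val (Subtype.ext (he y.1 y.2) : (g ^ p ^ e) • y = y)
    obtain ⟨k, hk⟩ := hP.card_orbit x
    have : MulAction.orbit H x = MulAction.orbit (MulAction.toPermHom H (FLay ℓ n)).range x := by
      ext y
      constructor
      · rintro ⟨g, rfl⟩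
        exact ⟨⟨_, g, rfl⟩, rfl⟩
      · rintro ⟨⟨_, g, rfl⟩, rfl⟩
        exact ⟨g, rfl⟩
    rw [this, hk]
    have h1 : p ≡ 1 [MOD p - 1] := by
      have := hp.out.one_lt
      exact ((Nat.modEq_iff_dvd' this.le).2 dvd_rfl).symm
    simpa using h1.pow k
  haveI : Finite (MulAction.orbitRel.Quotient H (FLay ℓ n)) :=
    Finite.of_surjective _ F.orb_surj
  haveI := Fintype.ofFinite (MulAction.orbitRel.Quotient H (FLay ℓ n))
  have e := MulAction.selfEquivSigmaOrbits H (FLay ℓ n)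
  rw [Nat.card_congr e, Nat.card_sigma]
  have h3 : Nat.card (F.Orb n) =
      ∑ q : MulAction.orbitRel.Quotient H (FLay ℓ n), 1 := by
    rw [Finset.sum_const, smul_eq_mul, mul_one, Finset.card_univ, ← Nat.card_eq_fintype_card]
  rw [h3]
  apply Nat.ModEq.symm
  exact Nat.ModEq.sum fun q _ => hsz _

theorem isGreatest (F : ForestAct H Ω ℓ le) {p : ℕ} [hp : Fact p.Prime] {c : ℕ}
    (hcard : ∀ n, Nat.card (FLay ℓ n) = c * p ^ n) (hfin : ∀ n, Finite (FLay ℓ n))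
    (hpg : ∀ (n : ℕ) (g : H), ∃ e : ℕ, ∀ x, ℓ x = n → (g ^ p ^ e) • x = x)
    (C : ℕ) (hC : ∀ n, Nat.card (F.Orb n) ≤ C) :
    ∃ m, IsGreatest (famSet H) m ∧ m ≡ c [MOD p - 1] := by
  have hbdd : BddAbove (Set.range fun n => Nat.card (F.Orb n)) :=
    ⟨C, by rintro _ ⟨n, rfl⟩; exact hC n⟩
  obtain ⟨n, hn⟩ := Nat.sSup_mem (Set.range_nonempty fun n => Nat.card (F.Orb n)) hbdd
  refine ⟨Nat.card (F.Orb n), ⟨?_, ?_⟩, ?_⟩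
  · haveI := hfin n
    exact F.card_mem n
  · intro r hr
    obtain ⟨k, hk⟩ := F.le_card hfin hr
    refine hk.trans ?_
    simp only at hn
    rw [hn]
    exact le_csSup hbdd ⟨k, rfl⟩
  · haveI := hfin n
    refine (F.card_modEq n (hpg n)).trans ?_
    rw [hcard]
    have h1 : p ≡ 1 [MOD p - 1] := by
      have := hp.out.one_lt
      exact ((Nat.modEq_iff_dvd' this.le).2 dvd_rfl).symm
    simpa using (h1.pow n).mul_left c

end ForestAct

namespace Vertex

variable {m : ℕ → ℕ}

theorem IsPrefix.rfl' (v : Vertex m) : IsPrefix v v := ⟨le_rfl, fun _ => rfl⟩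

theorem IsPrefix.trans' {u v w : Vertex m} (h1 : IsPrefix u v) (h2 : IsPrefix v w) :
    IsPrefix u w := by
  obtain ⟨a, ha⟩ := h1
  obtain ⟨b, hb⟩ := h2
  refine ⟨a.trans b, fun i => ?_⟩
  rw [← ha i, ← hb (Fin.castLE a i)]
  rfl

theorem IsPrefix.uniq {u v w : Vertex m} (h : u.1 = v.1) (h1 : IsPrefix u w)
    (h2 : IsPrefix v w) : u = v := by
  obtain ⟨a, ha⟩ := h1
  obtain ⟨b, hb⟩ := h2
  obtain ⟨n, u⟩ := u
  obtain ⟨k, v⟩ := v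
  obtain rfl : n = k := h
  congr 1
  funext i
  exact (ha i).symm.trans (hb i)

/-- Truncation. -/
def trunc (v : Vertex m) (k : ℕ) (h : k ≤ v.1) : Vertex m := ⟨k, fun i => v.2 (Fin.castLE h i)⟩

theorem trunc_prefix (v : Vertex m) (k : ℕ) (h : k ≤ v.1) : IsPrefix (v.trunc k h) v :=
  ⟨h, fun _ => rfl⟩

theorem exists_desc (hm : ∀ n, 0 < m n) (v : Vertex m) (n : ℕ) (h : v.1 ≤ n) :
    ∃ w : Vertex m, w.1 = n ∧ IsPrefix v w := by
  refine ⟨⟨n, fun i => if hi : i.1 < v.1 then v.2 ⟨i.1, hi⟩ else ⟨0, hm _⟩⟩, rfl, h, fun i => ?_⟩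
  exact dif_pos i.2

end Vertex

/-- Layer equivalence. -/
def layEquiv (m : ℕ → ℕ) (n : ℕ) : {v : Vertex m // v.1 = n} ≃ (∀ i : Fin n, Fin (m i)) where
  toFun v := v.2 ▸ v.1.2
  invFun f := ⟨⟨n, f⟩, rfl⟩
  left_inv := by
    rintro ⟨⟨k, f⟩, h⟩
    cases h
    rfl
  right_inv f := rfl

instance (m : ℕ → ℕ) (n : ℕ) : Finite {v : Vertex m // v.1 = n} :=
  Finite.of_equiv _ (layEquiv m n).symm

theorem card_lay (p n : ℕ) : Nat.card {v : Vertex (fun _ => p) // v.1 = n} = p ^ n := by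
  rw [Nat.card_congr (layEquiv _ n)]
  simp

namespace IsBranchGroup

variable {m : ℕ → ℕ} {G : Type*} [Group G] [MulAction G (Vertex m)]

theorem lev (hG : IsBranchGroup m G) (g : G) (v : Vertex m) : (g • v).1 = v.1 := by
  obtain ⟨n, hn⟩ : ∃ n, v.1 = n := ⟨_, rfl⟩
  induction n generalizing v with
  | zero =>
    by_contra h
    have hpos : 0 < (g • v).1 := by omega
    have hc : Vertex.IsChild ((g • v).trunc ((g • v).1 - 1) (by omega)) (g • v) :=
      ⟨by simp [Vertex.trunc]; omega, Vertex.trunc_prefix _ _ _⟩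
    have := (hG.aut g⁻¹ _ _).1 hc
    rw [inv_smul_smul] at this
    have := this.1
    omega
  | succ n ih =>
    have hc : Vertex.IsChild (v.trunc n (by omega)) v :=
      ⟨hn, Vertex.trunc_prefix _ _ _⟩
    have h1 := ((hG.aut g _ _).1 hc).1
    rw [h1, ih _ rfl]
    exact hn.symm

theorem pre (hG : IsBranchGroup m G) (g : G) (u v : Vertex m) (h : Vertex.IsPrefix u v) :
    Vertex.IsPrefix (g • u) (g • v) := by
  obtain ⟨k, hk⟩ : ∃ k, v.1 = u.1 + k := ⟨v.1 - u.1, by have := h.1; omega⟩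
  induction k generalizing v with
  | zero =>
    rw [Vertex.IsPrefix.uniq (by omega) h (Vertex.IsPrefix.rfl' v)]
    exact Vertex.IsPrefix.rfl' _
  | succ k ih =>
    have hc : Vertex.IsChild (v.trunc (u.1 + k) (by omega)) v :=
      ⟨by simp [Vertex.trunc]; omega, Vertex.trunc_prefix _ _ _⟩
    have h1 := ((hG.aut g _ _).1 hc).2
    refine Vertex.IsPrefix.trans' (ih _ ?_ rfl) h1
    obtain ⟨a, ha⟩ := h
    exact ⟨Nat.le_add_right _ _, fun i => ha i⟩

theorem mem_rist {v : Vertex m} {g : G} :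
    g ∈ rist G v ↔ ∀ w, ¬ Vertex.IsPrefix v w → g • w = w := by
  simp [rist, Subgroup.mem_iInf]

theorem rist_conj (hG : IsBranchGroup m G) {v : Vertex m} {a : G} (x : G) (ha : a ∈ rist G v) :
    x * a * x⁻¹ ∈ rist G (x • v) := by
  rw [mem_rist] at *
  intro y hy
  rw [mul_smul, mul_smul, ha, smul_inv_smul]
  intro h
  apply hy
  have := hG.pre x _ _ h
  rwa [smul_inv_smul] at this

theorem infinite (hG : IsBranchGroup m G) (hm : ∀ n, 2 ≤ m n) : Infinite G := by
  by_contra hfin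
  rw [not_infinite_iff_finite] at hfin
  let n := Nat.card G
  let v0 : Vertex m := ⟨n, fun i => ⟨0, by have := hm i; omega⟩⟩
  have hs : Function.Surjective
      (fun g : G => (⟨g • v0, hG.lev g v0⟩ : {v : Vertex m // v.1 = n})) := by
    rintro ⟨w, hw⟩
    obtain ⟨g, hg⟩ := hG.trans v0 w hw.symm
    exact ⟨g, Subtype.ext hg⟩
  have h1 := Nat.card_le_card_of_surjective _ hs
  rw [Nat.card_congr (layEquiv m n)] at h1
  have h2 : 2 ^ n ≤ Nat.card (∀ i : Fin n, Fin (m i)) := by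
    rw [Nat.card_pi]
    simp only [Nat.card_eq_fintype_card, Fintype.card_fin]
    calc 2 ^ n = ∏ i : Fin n, 2 := by simp
      _ ≤ _ := Finset.prod_le_prod' fun i _ => hm _
  have h3 : n < 2 ^ n := Nat.lt_two_pow_self
  have : n = Nat.card G := rfl
  omega

theorem rist_inter_ne (hG : IsBranchGroup m G) (hm : ∀ n, 2 ≤ m n) (K : Subgroup G)
    [hK : K.FiniteIndex] (w : Vertex m) : ∃ b ∈ K, b ∈ rist G w ∧ b ≠ 1 := by
  by_contra! hcon
  have hN : ∀ u : Vertex m, u.1 = w.1 → ∀ b ∈ K.normalCore, b ∈ rist G u → b = 1 := by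
    intro u hu b hb hbu
    obtain ⟨x, hx⟩ := hG.trans u w hu
    have h1 : x * b * x⁻¹ ∈ K :=
      K.normalCore_le (K.normalCore_normal.conj_mem b hb x)
    have h2 := hcon _ h1 (hx ▸ hG.rist_conj x hbu)
    exact (conj_eq_one_iff).1 h2
  have hfin : ∀ u : {v : Vertex m // v.1 = w.1}, Finite (rist G u.1) := by
    intro u
    apply Finite.of_injective (fun b : rist G u.1 => (b.1 : G ⧸ K.normalCore))
    intro a b hab
    have h1 : a.1⁻¹ * b.1 ∈ K.normalCore := QuotientGroup.eq.1 hab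
    have h2 := hN u.1 u.2 _ h1 ((rist G u.1).mul_mem ((rist G u.1).inv_mem a.2) b.2)
    exact Subtype.ext (inv_mul_eq_one.1 h2)
  haveI := Fintype.ofFinite {v : Vertex m // v.1 = w.1}
  have hcomm : Pairwise fun i j : {v : Vertex m // v.1 = w.1} =>
      ∀ x y : G, x ∈ rist G i.1 → y ∈ rist G j.1 → Commute x y := by
    intro i j hij x y hx hy
    refine fa_commute hG.faithful (P := Vertex.IsPrefix i.1) (Q := Vertex.IsPrefix j.1)
      (fun z h1 h2 => hij ?_) x y (mem_rist.1 hx) (mem_rist.1 hy)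
    exact Subtype.ext (Vertex.IsPrefix.uniq (i.2.trans j.2.symm) h1 h2)
  have hr := Subgroup.noncommPiCoprod_range (hcomm := hcomm)
  have hlay : ristLayer m G w.1 = ⨆ i : {v : Vertex m // v.1 = w.1}, rist G i.1 := by
    rw [iSup_subtype]
    rfl
  have hfr : Finite (ristLayer m G w.1) := by
    rw [hlay, ← hr]
    exact Finite.of_surjective _ (MonoidHom.rangeRestrict_surjective _)
  haveI := hG.ristFiniteIndex w.1
  haveI := hG.infinite hm
  have : Finite G := by
    refine Nat.finite_of_card_ne_zero ?_
    rw [← (ristLayer m G w.1).card_mul_index]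
    exact mul_ne_zero Nat.card_pos.ne' Subgroup.FiniteIndex.index_ne_zero
  exact not_finite G

theorem nonab (hG : IsBranchGroup m G) (hm : ∀ n, 2 ≤ m n) (K : Subgroup G)
    [hK : K.FiniteIndex] (v : Vertex m) :
    ∃ a ∈ K, ∃ b ∈ K, a ∈ rist G v ∧ b ∈ rist G v ∧ a * b ≠ b * a := by
  obtain ⟨a, haK, hav, ha1⟩ := hG.rist_inter_ne hm K v
  have : ∃ w : Vertex m, a • w ≠ w := by
    by_contra! h
    exact ha1 (hG.faithful a h)
  obtain ⟨w, hw⟩ := this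
  have hvw : Vertex.IsPrefix v w := by
    by_contra h
    exact hw (mem_rist.1 hav w h)
  obtain ⟨b, hbK, hbw, hb1⟩ := hG.rist_inter_ne hm K w
  refine ⟨a, haK, b, hbK, hav, mem_rist.2 fun y hy => mem_rist.1 hbw y fun h =>
    hy (hvw.trans' h), fun hab => hb1 (hG.faithful b fun x => ?_)⟩
  have h1 := hG.rist_conj a hbw
  rw [hab, mul_inv_cancel_right] at h1
  by_cases hx : Vertex.IsPrefix w x
  · refine mem_rist.1 h1 x fun h => hw ?_
    exact Vertex.IsPrefix.uniq (hG.lev a w) h hx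
  · exact mem_rist.1 hbw x hx

end IsBranchGroup

/-- The forest. -/
def Forest (n p : ℕ) : Type := Fin n × Vertex (fun _ => p)

instance forestAction {n p : ℕ} {G : Fin n → Type*} [∀ j, Group (G j)]
    [∀ j, MulAction (G j) (Vertex (fun _ => p))] : MulAction (∀ j, G j) (Forest n p) where
  smul g x := (x.1, g x.1 • x.2)
  one_smul x := Prod.ext rfl (one_smul (G x.1) x.2)
  mul_smul a b x := Prod.ext rfl (mul_smul (a x.1) (b x.1) x.2)

theorem forestAct {n p : ℕ} (hp : p.Prime) (G : Fin n → Type*) [∀ j, Group (G j)]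
    [∀ j, MulAction (G j) (Vertex (fun _ => p))]
    (hG : ∀ j, IsBranchGroup (fun _ => p) (G j)) (A : Subgroup (∀ j, G j)) [hA : A.FiniteIndex] :
    ForestAct A (Forest n p) (fun x => x.2.1)
      (fun x y => x.1 = y.1 ∧ Vertex.IsPrefix x.2 y.2) where
  faithful := by
    rintro ⟨g, hg⟩ h
    apply Subtype.ext
    funext j
    exact (hG j).faithful _ fun v => congrArg Prod.snd (h (j, v))
  lev := fun g x => (hG x.1).lev (g.1 x.1) x.2
  le_smul := by
    rintro ⟨g, hg⟩ ⟨i, u⟩ ⟨j, v⟩ ⟨h1, h2⟩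
    obtain rfl : i = j := h1
    exact ⟨rfl, (hG i).pre (g i) u v h2⟩
  uniq := by
    rintro u w x h ⟨h1, h2⟩ ⟨h3, h4⟩
    exact Prod.ext (h1.trans h3.symm) (Vertex.IsPrefix.uniq h h2 h4)
  desc := by
    rintro ⟨j, u⟩ k hk
    obtain ⟨w, h1, h2⟩ := Vertex.exists_desc (fun _ => hp.pos) u k hk
    exact ⟨(j, w), h1, rfl, h2⟩
  nonab := by
    classical
    rintro ⟨j, u⟩
    haveI : (A.comap (MonoidHom.mulSingle G j)).FiniteIndex := by
      constructor
      rw [Subgroup.index_comap]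
      exact (Subgroup.instFiniteIndex_subgroupOf A _).index_ne_zero
    obtain ⟨a, ha, b, hb, hau, hbu, hab⟩ :=
      (hG j).nonab (fun _ => hp.two_le) (A.comap (MonoidHom.mulSingle G j)) u
    have key : ∀ c ∈ rist (G j) u, ∀ x : Forest n p, ¬ (j = x.1 ∧ Vertex.IsPrefix u x.2) →
        (Pi.mulSingle j c : ∀ j, G j) • x = x := by
      rintro c hc ⟨i, v⟩ hx
      change ((i, (Pi.mulSingle j c : ∀ j, G j) i • v) : Fin n × Vertex (fun _ => p)) = (i, v)
      by_cases hij : i = j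
      · subst hij
        rw [Pi.mulSingle_eq_same]
        exact Prod.ext rfl (IsBranchGroup.mem_rist.1 hc v fun h => hx ⟨rfl, h⟩)
      · rw [Pi.mulSingle_eq_of_ne hij, one_smul]
    refine ⟨⟨_, ha⟩, ⟨_, hb⟩, fun x hx => key a hau x hx, fun x hx => key b hbu x hx,
      fun h => hab ?_⟩
    have h1 := congrFun (congrArg Subtype.val h) j
    simpa using h1

/-- Layers of the forest. -/
def forestLay (n p k : ℕ) : FLay (fun x : Forest n p => x.2.1) k ≃
    Fin n × {v : Vertex (fun _ => p) // v.1 = k} where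
  toFun x := (x.1.1, ⟨x.1.2, x.2⟩)
  invFun y := ⟨(y.1, y.2.1), y.2.2⟩
  left_inv _ := rfl
  right_inv _ := rfl

theorem main_aux {n p : ℕ} (hp : p.Prime) (G : Fin n → Type*) [∀ j, Group (G j)]
    [∀ j, MulAction (G j) (Vertex (fun _ => p))]
    (hG : ∀ j, IsBranchGroup (fun _ => p) (G j))
    (hpg : ∀ (j : Fin n) (k : ℕ) (g : G j), ∃ e : ℕ,
      ∀ v : Vertex (fun _ => p), v.1 = k → (g ^ p ^ e) • v = v)
    (A : Subgroup (∀ j, G j)) (hA : A.FiniteIndex) :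
    ∃ m, IsGreatest (famSet A) m ∧ m ≡ n [MOD p - 1] := by
  classical
  haveI : Fact p.Prime := ⟨hp⟩
  have F := forestAct hp G hG A
  have hfin : ∀ k, Finite (FLay (fun x : Forest n p => x.2.1) k) := fun k =>
    Finite.of_equiv _ (forestLay n p k).symm
  refine F.isGreatest (c := n) (fun k => ?_) hfin (fun k g => ?_) (n * A.index) (fun k => ?_)
  · rw [Nat.card_congr (forestLay n p k), Nat.card_prod, card_lay]
    simp
  · choose e he using fun j => hpg j k (g.1 j)
    refine ⟨∑ j, e j, ?_⟩
    rintro ⟨j, v⟩ hv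
    refine Prod.ext rfl ?_
    change ((g.1 j) ^ p ^ (∑ j, e j)) • v = v
    rw [← Finset.add_sum_erase _ _ (Finset.mem_univ j), pow_add, pow_mul]
    generalize p ^ (∑ x ∈ Finset.univ.erase j, e x) = q
    have h0 : (g.1 j ^ p ^ e j) ∈ MulAction.stabilizer (G j) v := he j v hv
    exact (MulAction.stabilizer (G j) v).pow_mem h0 q
  · let v0 : Vertex (fun _ => p) := ⟨k, fun _ => ⟨0, hp.pos⟩⟩
    let f : Fin n × ((∀ j, G j) ⧸ A) → F.Orb k := fun y =>
      F.orb ⟨(y.1, (y.2.out⁻¹ : ∀ j, G j) y.1 • v0), (hG y.1).lev _ v0⟩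
    have hf : Function.Surjective f := by
      intro q
      obtain ⟨⟨⟨j, v⟩, hv⟩, rfl⟩ := F.orb_surj q
      obtain ⟨x, hx⟩ := (hG j).trans v0 v hv.symm
      let g : ∀ j, G j := Pi.mulSingle j x
      refine ⟨(j, ((g⁻¹ : ∀ j, G j) : (∀ j, G j) ⧸ A)), ?_⟩
      refine (F.orb_eq _ _).2 ?_
      obtain ⟨h, hh⟩ := QuotientGroup.mk_out_eq_mul A g⁻¹
      refine ⟨h⁻¹, ?_⟩
      refine Prod.ext rfl ?_
      change ((h⁻¹ : A).1 j) • v = ((Quotient.out ((g⁻¹ : ∀ j, G j) : (∀ j, G j) ⧸ A))⁻¹ j) • v0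
      rw [hh]
      change ((h⁻¹ : A).1 j) • v = ((g⁻¹ * h.1)⁻¹ j) • v0
      rw [mul_inv_rev, inv_inv, Pi.mul_apply, mul_smul, ← hx]
      simp [g]
    haveI : Finite ((∀ j, G j) ⧸ A) := Subgroup.finite_quotient_of_finiteIndex
    have := Nat.card_le_card_of_surjective f hf
    rw [Nat.card_prod] at this
    simpa [Subgroup.index] using this

/-- **Corollary.** Let `𝔇` be the family of branch groups on the `p`-ary tree which
act as a `p`-group on each layer.  If a direct product `Γ₁` of `n₁` groups in `𝔇` and a
direct product `Γ₂` of `n₂` groups in `𝔇` are abstractly commensurable (have isomorphic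
subgroups of finite index), then `n₁ ≡ n₂ (mod p-1)`. -/
theorem commensurable_products_mod
    (p : ℕ) (hp : p.Prime) (n₁ n₂ : ℕ)
    (G₁ : Fin n₁ → Type u) [∀ j, Group (G₁ j)]
    [∀ j, MulAction (G₁ j) (Vertex (fun _ => p))]
    (hG₁ : ∀ j, IsBranchGroup (fun _ => p) (G₁ j))
    (hp₁ : ∀ (j : Fin n₁) (k : ℕ) (g : G₁ j), ∃ e : ℕ,
      ∀ v : Vertex (fun _ => p), v.1 = k → (g ^ p ^ e) • v = v)
    (G₂ : Fin n₂ → Type v) [∀ j, Group (G₂ j)]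
    [∀ j, MulAction (G₂ j) (Vertex (fun _ => p))]
    (hG₂ : ∀ j, IsBranchGroup (fun _ => p) (G₂ j))
    (hp₂ : ∀ (j : Fin n₂) (k : ℕ) (g : G₂ j), ∃ e : ℕ,
      ∀ v : Vertex (fun _ => p), v.1 = k → (g ^ p ^ e) • v = v)
    (hcomm : ∃ (A : Subgroup (∀ j, G₁ j)) (B : Subgroup (∀ j, G₂ j)),
      A.FiniteIndex ∧ B.FiniteIndex ∧ Nonempty (↥A ≃* ↥B)) :
    n₁ ≡ n₂ [MOD p - 1] := by
  obtain ⟨A, B, hA, hB, ⟨e⟩⟩ := hcomm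
  obtain ⟨m₁, h1, h1'⟩ := main_aux hp G₁ hG₁ hp₁ A hA
  obtain ⟨m₂, h2, h2'⟩ := main_aux hp G₂ hG₂ hp₂ B hB
  have he : famSet A = famSet B :=
    Set.Subset.antisymm (famSet_sub e) (famSet_sub e.symm)
  rw [he] at h1
  rw [h1.unique h2] at h1'
  exact h1'.symm.trans h2'
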